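/- With h = (h_1, 0,...,0)ᵀ, f = (f_1,...,f_{J+1})ᵀ, Γ diagonal with positive entries d_1 = σ_1² and d_i = σ_i² + q_i for i ≥ 2, and p_1, p_u > 0, the quantity γ_{1,QF2} = p_1 hᴴ(p_u f fᴴ + Γ)^{-1} h equals (p_1|h_1|²/σ_1²)·(1 − p_u|f_1|²/(σ_1² + p_u|f_1|² + p_u σ_1² Σ_{i=2}^{J+1} |f_i|²/(σ_i² + q_i))). -/

import Mathlib

open Matrix

lemma aux_inv {n : ℕ} (d : Fin n → ℝ) (hd : ∀ i, 0 < d i) (f : Fin n → ℂ) (pu : ℝ) (hpu : 0 < pu) :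
    ((pu : ℂ) • Matrix.vecMulVec f (star f) + Matrix.diagonal (fun i => (d i : ℂ)))⁻¹
     = Matrix.of (fun i j => (if i = j then (d j : ℂ)⁻¹ else 0)
        - (pu : ℂ) / ((1 + pu * ∑ k, Complex.normSq (f k) / d k : ℝ) : ℂ)
          * (f i / d i) * (star (f j) / d j)) := by
  have hS : 0 ≤ ∑ k, Complex.normSq (f k) / d k :=
    Finset.sum_nonneg fun k _ => div_nonneg (Complex.normSq_nonneg _) (hd k).le
  have hD : ((1 + pu * ∑ k, Complex.normSq (f k) / d k : ℝ) : ℂ) ≠ 0 := by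
    have : 0 < 1 + pu * ∑ k, Complex.normSq (f k) / d k := by positivity
    exact_mod_cast this.ne'
  have hSc : ∑ k, star (f k) * (f k / d k) = ((∑ k, Complex.normSq (f k) / d k : ℝ) : ℂ) := by
    push_cast
    refine Finset.sum_congr rfl fun k _ => ?_
    rw [Complex.normSq_eq_conj_mul_self]
    simp [mul_div_assoc]
  have hdc : ∀ i, (d i : ℂ) ≠ 0 := fun i => by exact_mod_cast (hd i).ne'
  apply Matrix.inv_eq_right_inv
  rw [add_mul]
  ext i j
  rw [Matrix.add_apply, Matrix.diagonal_mul, Matrix.mul_apply]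
  have h1 : ∀ k, ((pu : ℂ) • Matrix.vecMulVec f (star f)) i k * (Matrix.of (fun i j => (if i = j then (d j : ℂ)⁻¹ else 0)
        - (pu : ℂ) / ((1 + pu * ∑ k, Complex.normSq (f k) / d k : ℝ) : ℂ)
          * (f i / d i) * (star (f j) / d j)) : Matrix (Fin n) (Fin n) ℂ) k j
      = (if k = j then pu * f i * star (f k) * (d j : ℂ)⁻¹ else 0)
        - (pu * f i * ((pu : ℂ) / ((1 + pu * ∑ k, Complex.normSq (f k) / d k : ℝ) : ℂ))
          * (star (f j) / d j)) * (star (f k) * (f k / d k)) := by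
    intro k
    simp only [Matrix.smul_apply, Matrix.vecMulVec_apply, Matrix.of_apply, Pi.star_apply, smul_eq_mul]
    split_ifs <;> ring
  rw [Finset.sum_congr rfl fun k _ => h1 k, Finset.sum_sub_distrib, ← Finset.mul_sum, hSc,
    Finset.sum_ite_eq' ]
  simp only [Finset.mem_univ, if_true, Matrix.of_apply, Matrix.one_apply]
  push_cast at hD ⊢
  generalize (∑ k, (Complex.normSq (f k) : ℂ) / d k) = S at *
  have := hdc i
  have := hdc j
  split_ifs with hij
  · subst hij
    field_simp
    ring
  · field_simp
    ring

/-- Proposition 1: UE1's SINR under linear interference cancellation (Scheme 2),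
`γ_{1,QF2} = p₁ hᴴ (p_u f fᴴ + Γ)⁻¹ h
  = (p₁|h₁|²/σ₁²)(1 − p_u|f₁|²/(σ₁² + p_u|f₁|² + p_u σ₁² Σ_{i≥2} |fᵢ|²/(σᵢ²+qᵢ)))`,
where `Γ = diag(σ₁², σ₂²+q₂, …, σ_{J+1}²+q_{J+1})` and `h = (h₁,0,…,0)ᵀ`. -/
theorem prop1_scheme2_sinr {J : ℕ}
    (σsq q : Fin (J + 1) → ℝ) (hσ : ∀ i, 0 < σsq i) (hq : ∀ i, 0 ≤ q i)
    (d : Fin (J + 1) → ℝ) (hd0 : d 0 = σsq 0) (hdi : ∀ i, i ≠ 0 → d i = σsq i + q i)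
    (h f : Fin (J + 1) → ℂ) (hh : ∀ i, i ≠ 0 → h i = 0)
    (p1 pu : ℝ) (hp1 : 0 < p1) (hpu : 0 < pu) :
    (p1 : ℂ) * (star h ⬝ᵥ
        (((pu : ℂ) • Matrix.vecMulVec f (star f)
            + Matrix.diagonal (fun i => (d i : ℂ)))⁻¹ *ᵥ h))
      = ((p1 * Complex.normSq (h 0) / σsq 0
          * (1 - pu * Complex.normSq (f 0)
              / (σsq 0 + pu * Complex.normSq (f 0)
                  + pu * σsq 0 * ∑ i ∈ Finset.univ.erase 0,
                      Complex.normSq (f i) / (σsq i + q i))) : ℝ) : ℂ) := by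
  have hd : ∀ i, 0 < d i := by
    intro i
    by_cases hi : i = 0
    · subst hi; rw [hd0]; exact hσ 0
    · rw [hdi i hi]; linarith [hσ i, hq i]
  rw [aux_inv d hd f pu hpu]
  have hT : ∑ i ∈ Finset.univ.erase 0, Complex.normSq (f i) / (σsq i + q i)
      = ∑ i ∈ Finset.univ.erase 0, Complex.normSq (f i) / d i :=
    Finset.sum_congr rfl fun i hi => by rw [hdi i (Finset.ne_of_mem_erase hi)]
  have hT0 : 0 ≤ ∑ i ∈ Finset.univ.erase 0, Complex.normSq (f i) / d i :=
    Finset.sum_nonneg fun k _ => div_nonneg (Complex.normSq_nonneg _) (hd k).le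
  rw [hT, ← Finset.add_sum_erase Finset.univ _ (Finset.mem_univ 0), ← hd0]
  generalize ∑ i ∈ Finset.univ.erase 0, Complex.normSq (f i) / d i = T at *
  have hs := hd 0
  have hn := Complex.normSq_nonneg (f 0)
  rw [dotProduct, Finset.sum_eq_single 0 (fun i _ hi => by simp [hh i hi]) (by simp),
    Matrix.mulVec, dotProduct,
    Finset.sum_eq_single 0 (fun i _ hi => by simp [hh i hi]) (by simp)]
  simp only [Matrix.of_apply, if_true, Pi.star_apply]
  have e1 : ∀ z : ℂ, (Complex.normSq z : ℂ) = star z * z := fun z => Complex.normSq_eq_conj_mul_self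
  have key : 1 - pu * Complex.normSq (f 0) / (d 0 + pu * Complex.normSq (f 0) + pu * d 0 * T)
     = 1 - pu / (1 + pu * (Complex.normSq (f 0) / d 0 + T)) * Complex.normSq (f 0) / d 0 := by
    have a1 : d 0 + pu * Complex.normSq (f 0) + pu * d 0 * T
       = d 0 * (1 + pu * (Complex.normSq (f 0) / d 0 + T)) := by field_simp; ring
    have a2 : 0 < 1 + pu * (Complex.normSq (f 0) / d 0 + T) := by positivity
    rw [a1]
    generalize 1 + pu * (Complex.normSq (f 0) / d 0 + T) = D at *
    field_simp
  rw [key]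
  generalize 1 + pu * (Complex.normSq (f 0) / d 0 + T) = D at *
  push_cast
  rw [e1, e1]
  ring
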